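/- arXiv:math/9808110 — 2 statements merged into one kernel-verified Lean document; each statement's English description precedes it below -/
import Mathlib

section
/- The linear functional I : A → ℂ defined on the basis monomials η₊^n η₋^m δ^k (0 ≤ n,m,k ≤ p−1) by I(η₊^{p−1}η₋^{p−1}δ⁰) = q^{−1} and I = 0 on all other basis monomials is an invariant integral on E(1,1|p): for every a ∈ A one has (id⊗I)(Δ(a)) = I(a)·1_A and (I⊗id)(Δ(a)) = I(a)·1_A. Moreover it is unique up to scalar: every linear functional J : A → ℂ satisfying (id⊗J)(Δ(a)) = J(a)·1_A and (J⊗id)(Δ(a)) = J(a)·1_A for all a ∈ A is a complex scalar multiple of I. -/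
open scoped TensorProduct

noncomputable section

/-- `q = exp(2πi/p)`, a primitive `p`-th root of unity. -/
def q (p : ℕ) : ℂ := Complex.exp (2 * Real.pi * Complex.I / p)

/-- `q^{1/2} = exp(iπ/p)`. -/
def qh (p : ℕ) : ℂ := Complex.exp (Real.pi * Complex.I / p)

/-- The balanced q-number `[k] = (q^k - q^{-k})/(q - q^{-1})`. -/
def qnum (p k : ℕ) : ℂ := (q p ^ k - (q p)⁻¹ ^ k) / (q p - (q p)⁻¹)

/-- The balanced q-factorial `[k]! = [1][2]⋯[k]`, with `[0]! = 1`. -/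
def qfact (p k : ℕ) : ℂ := ∏ j ∈ Finset.range k, qnum p (j + 1)

/-- Generators `η₊, η₋, δ` of the coordinate algebra of `E(1,1|p)`. -/
inductive Gen : Type
  | ep : Gen
  | em : Gen
  | d : Gen

open FreeAlgebra in
/-- The defining relations of `A(E(1,1|p))`: the two-sided ideal generated by
`η₋η₊ − q²η₊η₋`, `η₊δ − q²δη₊`, `η₋δ − q²δη₋`, `δ^p − 1`, `η₊^p`, `η₋^p`. -/
inductive ERel (p : ℕ) : FreeAlgebra ℂ Gen → FreeAlgebra ℂ Gen → Prop
  | commEta : ERel p (ι ℂ Gen.em * ι ℂ Gen.ep) ((q p ^ 2) • (ι ℂ Gen.ep * ι ℂ Gen.em))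
  | commEpD : ERel p (ι ℂ Gen.ep * ι ℂ Gen.d) ((q p ^ 2) • (ι ℂ Gen.d * ι ℂ Gen.ep))
  | commEmD : ERel p (ι ℂ Gen.em * ι ℂ Gen.d) ((q p ^ 2) • (ι ℂ Gen.d * ι ℂ Gen.em))
  | deltaPow : ERel p (ι ℂ Gen.d ^ p) 1
  | epPow : ERel p (ι ℂ Gen.ep ^ p) 0
  | emPow : ERel p (ι ℂ Gen.em ^ p) 0

/-- The coordinate algebra `A = A(E(1,1|p))` of the reduced quantum Poincaré group. -/
abbrev A (p : ℕ) : Type := RingQuot (ERel p)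

/-- `η₊ ∈ A`. -/
def ηp (p : ℕ) : A p := RingQuot.mkAlgHom ℂ (ERel p) (FreeAlgebra.ι ℂ Gen.ep)

/-- `η₋ ∈ A`. -/
def ηm (p : ℕ) : A p := RingQuot.mkAlgHom ℂ (ERel p) (FreeAlgebra.ι ℂ Gen.em)

/-- `δ ∈ A`. -/
def dl (p : ℕ) : A p := RingQuot.mkAlgHom ℂ (ERel p) (FreeAlgebra.ι ℂ Gen.d)

section QCommuting

variable {R : Type*} [Semiring R] [Algebra ℂ R]

theorem pow_mul_pow_of_qcomm {c : ℂ} {a b : R} (h : b * a = c • (a * b)) (i j : ℕ) :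
    b ^ j * a ^ i = c ^ (i * j) • (a ^ i * b ^ j) := by
  have h1 (j : ℕ) : b ^ j * a = c ^ j • (a * b ^ j) := by
    induction j with
    | zero => simp
    | succ j ih =>
      rw [pow_succ, mul_assoc, h, mul_smul_comm, ← mul_assoc, ih, smul_mul_assoc, smul_smul,
        mul_assoc, pow_succ' c]
  induction i with
  | zero => simp
  | succ i ih =>
    rw [pow_succ, ← mul_assoc, ih, smul_mul_assoc, mul_assoc, h1, mul_smul_comm, smul_smul,
      mul_assoc, add_mul, one_mul, pow_add]

/-- Gaussian binomial coefficients with parameter `c`. -/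
def gaussBinom (c : ℂ) : ℕ → ℕ → ℂ
  | _, 0 => 1
  | 0, _ + 1 => 0
  | n + 1, k + 1 => gaussBinom c n k + c ^ (k + 1) * gaussBinom c n (k + 1)

@[simp] theorem gaussBinom_zero_right (c : ℂ) (n : ℕ) : gaussBinom c n 0 = 1 := by
  cases n <;> rfl

theorem gaussBinom_eq_zero_of_lt (c : ℂ) {n k : ℕ} (h : n < k) : gaussBinom c n k = 0 := by
  induction n generalizing k with
  | zero => obtain ⟨k, rfl⟩ := Nat.exists_eq_succ_of_ne_zero h.ne'; rfl
  | succ n ih =>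
    obtain ⟨k, rfl⟩ := Nat.exists_eq_succ_of_ne_zero (Nat.ne_zero_of_lt h)
    simp [gaussBinom, ih (show n < k by omega), ih (show n < k + 1 by omega)]

@[simp] theorem gaussBinom_self (c : ℂ) (n : ℕ) : gaussBinom c n n = 1 := by
  induction n with
  | zero => rfl
  | succ n ih => simp [gaussBinom, ih, gaussBinom_eq_zero_of_lt c (Nat.lt_succ_self n)]

theorem gaussBinom_one_right (c : ℂ) (n : ℕ) :
    gaussBinom c n 1 = ∑ t ∈ Finset.range n, c ^ t := by
  induction n with
  | zero => rfl
  | succ n ih =>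
    rw [Finset.sum_range_succ', gaussBinom, ih, Finset.mul_sum]
    simp [pow_succ', add_comm]

theorem gaussBinom_one_right_ne_zero {c : ℂ} {p n : ℕ} (hc : IsPrimitiveRoot c p)
    (hn : n ≠ 0) (hnp : n < p) : gaussBinom c n 1 ≠ 0 := by
  rw [gaussBinom_one_right]
  intro h
  have h2 := geom_sum_mul c n
  rw [h, zero_mul] at h2
  exact hc.pow_ne_one_of_pos_of_lt hn hnp (sub_eq_zero.mp h2.symm)

theorem add_pow_of_qcomm {c : ℂ} {a b : R} (h : b * a = c • (a * b)) (n : ℕ) :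
    (a + b) ^ n =
      ∑ i ∈ Finset.range (n + 1), gaussBinom c n i • (a ^ i * b ^ (n - i)) := by
  induction n with
  | zero => simp
  | succ n ih =>
    have hb (i : ℕ) : b * (a ^ i * b ^ (n - i)) = c ^ i • (a ^ i * b ^ (n - i + 1)) := by
      have := pow_mul_pow_of_qcomm h i 1
      rw [pow_one, mul_one] at this
      rw [← mul_assoc, this, smul_mul_assoc, mul_assoc, ← pow_succ']
    rw [pow_succ', ih, add_mul, Finset.mul_sum, Finset.mul_sum,
      Finset.sum_range_succ' _ (n + 1), Finset.sum_range_succ' _ n]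
    simp only [mul_smul_comm, hb, ← mul_assoc, ← pow_succ', gaussBinom, add_smul,
      Finset.sum_add_distrib, Nat.add_sub_add_right, smul_smul]
    rw [Finset.sum_range_succ' _ n, Finset.sum_range_succ _ n, Finset.sum_range_succ _ n]
    simp only [gaussBinom_eq_zero_of_lt c (Nat.lt_succ_self n), mul_zero, zero_smul, add_zero]
    have hsum : ∑ i ∈ Finset.range n,
        (gaussBinom c n (i + 1) * c ^ (i + 1)) • (a ^ (i + 1) * b ^ (n - (i + 1) + 1)) =
        ∑ i ∈ Finset.range n,
          (c ^ (i + 1) * gaussBinom c n (i + 1)) • (a ^ (i + 1) * b ^ (n - i)) := by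
      refine Finset.sum_congr rfl fun i hi => ?_
      have : n - (i + 1) + 1 = n - i := by have := Finset.mem_range.mp hi; omega
      rw [this, mul_comm]
    have hsum' := (Finset.sum_range_succ' (fun i => gaussBinom c n i • (a ^ (i + 1) * b ^ (n - i)))
      n).symm.trans (Finset.sum_range_succ _ n)
    rw [gaussBinom_zero_right] at hsum'
    rw [hsum, ← add_assoc, hsum']
    simp [add_assoc]

end QCommuting

/-- The defining relations of the reduced quantum Poincaré group with `s` in place of `q²`. -/
structure PoincareTriple {R : Type*} [Semiring R] [Algebra ℂ R] (p : ℕ) (s : ℂ) (x y d : R) :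
    Prop where
  ne_zero : p ≠ 0
  prim : IsPrimitiveRoot s p
  y_mul_x : y * x = s • (x * y)
  x_mul_d : x * d = s • (d * x)
  y_mul_d : y * d = s • (d * y)
  d_pow : d ^ p = 1
  x_pow : x ^ p = 0
  y_pow : y ^ p = 0

/-- The values of the coproduct of the quantum Poincaré group on the generators. -/
structure IsPoincareComul {R : Type*} [Semiring R] [Algebra ℂ R] (p : ℕ) (x y d : R)
    (Δ : R →ₐ[ℂ] R ⊗[ℂ] R) : Prop where
  map_x : Δ x = x ⊗ₜ[ℂ] 1 + d ⊗ₜ[ℂ] x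
  map_y : Δ y = y ⊗ₜ[ℂ] 1 + (d ^ (p - 1)) ⊗ₜ[ℂ] y
  map_d : Δ d = d ⊗ₜ[ℂ] d

namespace PoincareTriple

variable {R : Type*} [Semiring R] [Algebra ℂ R] {p : ℕ} {s : ℂ} {x y d : R}

theorem param_ne_zero (h : PoincareTriple p s x y d) : s ≠ 0 := h.prim.ne_zero h.ne_zero

theorem d_mul_x (h : PoincareTriple p s x y d) : d * x = s⁻¹ • (x * d) := by
  rw [h.x_mul_d, inv_smul_smul₀ h.param_ne_zero]

theorem d_mul_y (h : PoincareTriple p s x y d) : d * y = s⁻¹ • (y * d) := by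
  rw [h.y_mul_d, inv_smul_smul₀ h.param_ne_zero]

theorem d_pow_of_dvd (h : PoincareTriple p s x y d) {k : ℕ} (hk : p ∣ k) : d ^ k = 1 := by
  obtain ⟨l, rfl⟩ := hk
  rw [pow_mul, h.d_pow, one_pow]

theorem d_pow_mod (h : PoincareTriple p s x y d) (k : ℕ) : d ^ (k % p) = d ^ k := by
  conv_rhs => rw [← Nat.mod_add_div k p, pow_add, pow_mul, h.d_pow, one_pow, mul_one]

theorem x_pow_of_le (h : PoincareTriple p s x y d) {n : ℕ} (hn : p ≤ n) : x ^ n = 0 :=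
  pow_eq_zero_of_le hn h.x_pow

theorem y_pow_of_le (h : PoincareTriple p s x y d) {n : ℕ} (hn : p ≤ n) : y ^ n = 0 :=
  pow_eq_zero_of_le hn h.y_pow

theorem monomial_mul_x (h : PoincareTriple p s x y d) (n m k : ℕ) :
    x ^ n * y ^ m * d ^ k * x = (s⁻¹ ^ k * s ^ m) • (x ^ (n + 1) * y ^ m * d ^ k) := by
  have h1 := pow_mul_pow_of_qcomm h.d_mul_x 1 k
  have h2 := pow_mul_pow_of_qcomm h.y_mul_x 1 m
  simp only [pow_one, one_mul] at h1 h2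
  rw [mul_assoc, h1, mul_smul_comm, mul_assoc, ← mul_assoc (y ^ m), h2, smul_mul_assoc,
    mul_smul_comm, smul_smul, pow_succ]
  simp only [mul_assoc]

theorem monomial_mul_y_pow (h : PoincareTriple p s x y d) (n m k j : ℕ) :
    x ^ n * y ^ m * d ^ k * y ^ j = s⁻¹ ^ (j * k) • (x ^ n * y ^ (m + j) * d ^ k) := by
  rw [mul_assoc, pow_mul_pow_of_qcomm h.d_mul_y, mul_smul_comm, pow_add]
  simp only [mul_assoc]

/-- The coefficients of the coproduct in the monomial basis. -/
def comulCoeff (s : ℂ) (n m i j : ℕ) : ℂ :=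
  gaussBinom s⁻¹ n i * gaussBinom s m j * s⁻¹ ^ (j * (n - i))

theorem comul_monomial (h : PoincareTriple p s x y d) {Δ : R →ₐ[ℂ] R ⊗[ℂ] R}
    (hΔ : IsPoincareComul p x y d Δ) (n m k : ℕ) :
    Δ (x ^ n * y ^ m * d ^ k) =
      ∑ i ∈ Finset.range (n + 1), ∑ j ∈ Finset.range (m + 1), comulCoeff s n m i j •
        ((x ^ i * y ^ j * d ^ (n - i + (p - 1) * (m - j) + k)) ⊗ₜ[ℂ]
          (x ^ (n - i) * y ^ (m - j) * d ^ k)) := by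
  have hX : (d ⊗ₜ[ℂ] x) * (x ⊗ₜ[ℂ] (1 : R)) =
      s⁻¹ • ((x ⊗ₜ[ℂ] (1 : R)) * (d ⊗ₜ[ℂ] x)) := by
    simp [h.d_mul_x, TensorProduct.smul_tmul']
  have hs : s⁻¹ ^ (p - 1) = s := by
    have hp := h.prim.pow_eq_one
    obtain ⟨p', rfl⟩ := Nat.exists_eq_succ_of_ne_zero h.ne_zero
    have h0 := h.param_ne_zero
    rw [Nat.succ_eq_add_one, pow_succ] at hp
    rw [Nat.succ_eq_add_one, Nat.add_sub_cancel, inv_pow]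
    exact inv_eq_of_mul_eq_one_right hp
  have hY : ((d ^ (p - 1)) ⊗ₜ[ℂ] y) * (y ⊗ₜ[ℂ] (1 : R)) =
      s • ((y ⊗ₜ[ℂ] (1 : R)) * ((d ^ (p - 1)) ⊗ₜ[ℂ] y)) := by
    have := pow_mul_pow_of_qcomm h.d_mul_y 1 (p - 1)
    rw [pow_one, one_mul, hs] at this
    simp [this, TensorProduct.smul_tmul']
  have key (i j a b : ℕ) : x ^ i * d ^ a * (y ^ j * d ^ b) * d ^ k =
      s⁻¹ ^ (j * a) • (x ^ i * y ^ j * d ^ (a + b + k)) := by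
    rw [mul_assoc (x ^ i), ← mul_assoc (d ^ a), pow_mul_pow_of_qcomm h.d_mul_y]
    simp only [smul_mul_assoc, mul_smul_comm, pow_add, mul_assoc]
  rw [map_mul, map_mul, map_pow, map_pow, map_pow, hΔ.map_x, hΔ.map_y, hΔ.map_d, add_pow_of_qcomm hX,
    add_pow_of_qcomm hY, Finset.sum_mul_sum, Finset.sum_mul]
  refine Finset.sum_congr rfl fun i _ => ?_
  rw [Finset.sum_mul]
  refine Finset.sum_congr rfl fun j _ => ?_
  simp only [Algebra.TensorProduct.tmul_pow, Algebra.TensorProduct.tmul_mul_tmul, one_pow,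
    one_mul, smul_mul_assoc, mul_smul_comm, smul_smul, ← pow_mul, key]
  rw [← TensorProduct.smul_tmul', smul_smul, comulCoeff,
    mul_comm (gaussBinom s m j)]

theorem integral_monomial (h : PoincareTriple p s x y d) {I : R →ₗ[ℂ] ℂ} {c : ℂ}
    (hI : ∀ n m k : ℕ, n < p → m < p → k < p →
      I (x ^ n * y ^ m * d ^ k) = if n = p - 1 ∧ m = p - 1 ∧ k = 0 then c else 0)
    (n m k : ℕ) :
    I (x ^ n * y ^ m * d ^ k) = if n = p - 1 ∧ m = p - 1 ∧ p ∣ k then c else 0 := by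
  have hp := h.ne_zero
  by_cases hn : n < p
  · by_cases hm : m < p
    · rw [← h.d_pow_mod, hI n m _ hn hm (Nat.mod_lt _ (Nat.pos_of_ne_zero hp))]
      simp only [Nat.dvd_iff_mod_eq_zero]
    · rw [h.y_pow_of_le (not_lt.mp hm), mul_zero, zero_mul, map_zero, if_neg (by omega)]
  · rw [h.x_pow_of_le (not_lt.mp hn), zero_mul, zero_mul, map_zero, if_neg (by omega)]

/-- A functional that detects the coefficient of `x ^ i * y ^ j * d ^ (-e)`. -/
def detect (I : R →ₗ[ℂ] ℂ) (p : ℕ) (x y d : R) (i j e : ℕ) : R →ₗ[ℂ] ℂ :=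
  I ∘ₗ LinearMap.mulLeft ℂ (x ^ (p - 1 - i)) ∘ₗ
    LinearMap.mulRight ℂ (y ^ (p - 1 - j) * d ^ e)

theorem detect_monomial (h : PoincareTriple p s x y d) {I : R →ₗ[ℂ] ℂ} {c : ℂ}
    (hI : ∀ n m k : ℕ,
      I (x ^ n * y ^ m * d ^ k) = if n = p - 1 ∧ m = p - 1 ∧ p ∣ k then c else 0)
    {i₀ j₀ : ℕ} (hi₀ : i₀ < p) (hj₀ : j₀ < p) (e i j l : ℕ) :
    detect I p x y d i₀ j₀ e (x ^ i * y ^ j * d ^ l) =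
      if i = i₀ ∧ j = j₀ ∧ p ∣ l + e then s⁻¹ ^ ((p - 1 - j₀) * l) * c else 0 := by
  have hmul : x ^ (p - 1 - i₀) * (x ^ i * y ^ j * d ^ l * (y ^ (p - 1 - j₀) * d ^ e)) =
      s⁻¹ ^ ((p - 1 - j₀) * l) •
        (x ^ (p - 1 - i₀ + i) * y ^ (j + (p - 1 - j₀)) * d ^ (l + e)) := by
    rw [← mul_assoc (x ^ i * y ^ j * d ^ l), h.monomial_mul_y_pow]
    simp only [smul_mul_assoc, mul_smul_comm, pow_add, mul_assoc]
  have hiff : (p - 1 - i₀ + i = p - 1 ∧ j + (p - 1 - j₀) = p - 1 ∧ p ∣ l + e) ↔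
      (i = i₀ ∧ j = j₀ ∧ p ∣ l + e) := by
    constructor <;> rintro ⟨h1, h2, h3⟩ <;> exact ⟨by omega, by omega, h3⟩
  simp only [detect, LinearMap.comp_apply, LinearMap.mulLeft_apply, LinearMap.mulRight_apply]
  rw [hmul, map_smul, hI, smul_eq_mul, mul_ite, mul_zero]
  simp only [hiff]

theorem linearMap_ext (h : PoincareTriple p s x y d)
    (hspan : Algebra.adjoin ℂ {x, y, d} = ⊤)
    {M : Type*} [AddCommMonoid M] [Module ℂ M] {f g : R →ₗ[ℂ] M}
    (hfg : ∀ n m k : ℕ, n < p → m < p →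
      f (x ^ n * y ^ m * d ^ k) = g (x ^ n * y ^ m * d ^ k)) : f = g := by
  have hfg' (n m k : ℕ) : f (x ^ n * y ^ m * d ^ k) = g (x ^ n * y ^ m * d ^ k) := by
    by_cases hn : n < p
    · by_cases hm : m < p
      · exact hfg n m k hn hm
      · simp [h.y_pow_of_le (not_lt.mp hm)]
    · simp [h.x_pow_of_le (not_lt.mp hn)]
  let S : Submodule ℂ R :=
    Submodule.span ℂ (Set.range fun t : ℕ × ℕ × ℕ => x ^ t.1 * y ^ t.2.1 * d ^ t.2.2)
  have hmem (n m k : ℕ) : x ^ n * y ^ m * d ^ k ∈ S :=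
    Submodule.subset_span ⟨(n, m, k), rfl⟩
  have hgen (z : R) (hz : ∀ n m k : ℕ, x ^ n * y ^ m * d ^ k * z ∈ S) (u : R) (hu : u ∈ S) :
      u * z ∈ S := by
    have hle : S ≤ S.comap (LinearMap.mulRight ℂ z) := by
      refine Submodule.span_le.mpr ?_
      rintro _ ⟨⟨n, m, k⟩, rfl⟩
      exact hz n m k
    exact hle hu
  have hmul (a : R) : ∀ u ∈ S, u * a ∈ S := by
    have ha : a ∈ Algebra.adjoin ℂ {x, y, d} := hspan ▸ Algebra.mem_top
    induction ha using Algebra.adjoin_induction with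
    | mem z hz =>
      rcases hz with rfl | rfl | rfl
      · refine hgen _ fun n m k => ?_
        rw [h.monomial_mul_x]
        exact S.smul_mem _ (hmem _ _ _)
      · refine hgen _ fun n m k => ?_
        have := h.monomial_mul_y_pow n m k 1
        rw [pow_one] at this
        rw [this]
        exact S.smul_mem _ (hmem _ _ _)
      · refine hgen _ fun n m k => ?_
        rw [mul_assoc, ← pow_succ]
        exact hmem _ _ _
    | algebraMap c =>
      intro u hu
      rw [← Algebra.commutes, ← Algebra.smul_def]
      exact S.smul_mem _ hu
    | add a b _ _ iha ihb =>
      intro u hu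
      rw [mul_add]
      exact S.add_mem (iha u hu) (ihb u hu)
    | mul a b _ _ iha ihb =>
      intro u hu
      rw [← mul_assoc]
      exact ihb _ (iha u hu)
  have htop : S = ⊤ := by
    refine Submodule.eq_top_iff'.mpr fun a => ?_
    simpa using hmul a 1 (by simpa using hmem 0 0 0)
  refine LinearMap.ext_on htop ?_
  rintro _ ⟨⟨n, m, k⟩, rfl⟩
  exact hfg' n m k

theorem rid_map_comul_monomial (h : PoincareTriple p s x y d) {Δ : R →ₐ[ℂ] R ⊗[ℂ] R}
    (hΔ : IsPoincareComul p x y d Δ) (J : R →ₗ[ℂ] ℂ) (n m k : ℕ) :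
    TensorProduct.rid ℂ R (TensorProduct.map LinearMap.id J (Δ (x ^ n * y ^ m * d ^ k))) =
      ∑ i ∈ Finset.range (n + 1), ∑ j ∈ Finset.range (m + 1),
        (comulCoeff s n m i j * J (x ^ (n - i) * y ^ (m - j) * d ^ k)) •
          (x ^ i * y ^ j * d ^ (n - i + (p - 1) * (m - j) + k)) := by
  rw [h.comul_monomial hΔ]
  simp only [map_sum, map_smul, TensorProduct.map_tmul, TensorProduct.rid_tmul, smul_smul,
    LinearMap.id_apply]

theorem lid_map_comul_monomial (h : PoincareTriple p s x y d) {Δ : R →ₐ[ℂ] R ⊗[ℂ] R}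
    (hΔ : IsPoincareComul p x y d Δ) (J : R →ₗ[ℂ] ℂ) (n m k : ℕ) :
    TensorProduct.lid ℂ R (TensorProduct.map J LinearMap.id (Δ (x ^ n * y ^ m * d ^ k))) =
      ∑ i ∈ Finset.range (n + 1), ∑ j ∈ Finset.range (m + 1),
        (comulCoeff s n m i j *
          J (x ^ i * y ^ j * d ^ (n - i + (p - 1) * (m - j) + k))) •
            (x ^ (n - i) * y ^ (m - j) * d ^ k) := by
  rw [h.comul_monomial hΔ]
  simp only [map_sum, map_smul, TensorProduct.map_tmul, TensorProduct.lid_tmul, smul_smul,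
    LinearMap.id_apply]

theorem integral_right_invariant (h : PoincareTriple p s x y d)
    (hspan : Algebra.adjoin ℂ {x, y, d} = ⊤) {Δ : R →ₐ[ℂ] R ⊗[ℂ] R}
    (hΔ : IsPoincareComul p x y d Δ) {I : R →ₗ[ℂ] ℂ} {c : ℂ}
    (hI : ∀ n m k : ℕ,
      I (x ^ n * y ^ m * d ^ k) = if n = p - 1 ∧ m = p - 1 ∧ p ∣ k then c else 0) (a : R) :
    TensorProduct.rid ℂ R (TensorProduct.map LinearMap.id I (Δ a)) = I a • 1 := by
  suffices hlin : (TensorProduct.rid ℂ R).toLinearMap ∘ₗ TensorProduct.map LinearMap.id I ∘ₗ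
      Δ.toLinearMap = LinearMap.smulRight I 1 from LinearMap.congr_fun hlin a
  refine h.linearMap_ext hspan fun n m k hn hm => ?_
  change TensorProduct.rid ℂ R
    (TensorProduct.map LinearMap.id I (Δ (x ^ n * y ^ m * d ^ k))) = I _ • 1
  rw [h.rid_map_comul_monomial hΔ, Finset.sum_eq_single_of_mem 0 (by simp),
    Finset.sum_eq_single_of_mem 0 (by simp)]
  · simp only [Nat.sub_zero]
    rw [hI]
    split_ifs with hc
    · obtain ⟨rfl, rfl, hk⟩ := hc
      have hd : p ∣ p - 1 + (p - 1) * (p - 1) + k := by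
        have h1 : p - 1 + (p - 1) * (p - 1) = p * (p - 1) := by
          obtain ⟨p', rfl⟩ := Nat.exists_eq_succ_of_ne_zero h.ne_zero
          simp only [Nat.succ_eq_add_one, Nat.add_sub_cancel]
          ring
        rw [h1]
        exact dvd_add (dvd_mul_right _ _) hk
      simp [h.d_pow_of_dvd hd, comulCoeff]
    · simp
  · intro j hj hj0
    have := Finset.mem_range.mp hj
    rw [hI, if_neg (by omega), mul_zero, zero_smul]
  · intro i hi hi0
    have := Finset.mem_range.mp hi
    refine Finset.sum_eq_zero fun j _ => ?_
    rw [hI, if_neg (by omega), mul_zero, zero_smul]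

theorem integral_left_invariant (h : PoincareTriple p s x y d)
    (hspan : Algebra.adjoin ℂ {x, y, d} = ⊤) {Δ : R →ₐ[ℂ] R ⊗[ℂ] R}
    (hΔ : IsPoincareComul p x y d Δ) {I : R →ₗ[ℂ] ℂ} {c : ℂ}
    (hI : ∀ n m k : ℕ,
      I (x ^ n * y ^ m * d ^ k) = if n = p - 1 ∧ m = p - 1 ∧ p ∣ k then c else 0) (a : R) :
    TensorProduct.lid ℂ R (TensorProduct.map I LinearMap.id (Δ a)) = I a • 1 := by
  suffices hlin : (TensorProduct.lid ℂ R).toLinearMap ∘ₗ TensorProduct.map I LinearMap.id ∘ₗ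
      Δ.toLinearMap = LinearMap.smulRight I 1 from LinearMap.congr_fun hlin a
  refine h.linearMap_ext hspan fun n m k hn hm => ?_
  change TensorProduct.lid ℂ R
    (TensorProduct.map I LinearMap.id (Δ (x ^ n * y ^ m * d ^ k))) = I _ • 1
  rw [h.lid_map_comul_monomial hΔ, Finset.sum_eq_single_of_mem n (by simp),
    Finset.sum_eq_single_of_mem m (by simp)]
  · simp only [Nat.sub_self, mul_zero, zero_add]
    rw [hI]
    split_ifs with hc
    · simp [h.d_pow_of_dvd hc.2.2, comulCoeff]
    · simp
  · intro j hj hjm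
    have := Finset.mem_range.mp hj
    rw [hI, if_neg (by omega), mul_zero, zero_smul]
  · intro i hi hin
    have := Finset.mem_range.mp hi
    refine Finset.sum_eq_zero fun j _ => ?_
    rw [hI, if_neg (by omega), mul_zero, zero_smul]

theorem detect_one (h : PoincareTriple p s x y d) {I : R →ₗ[ℂ] ℂ} {c : ℂ}
    (hI : ∀ n m k : ℕ,
      I (x ^ n * y ^ m * d ^ k) = if n = p - 1 ∧ m = p - 1 ∧ p ∣ k then c else 0)
    {i₀ j₀ : ℕ} (hi₀ : i₀ < p) (hj₀ : j₀ < p) (e : ℕ) :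
    detect I p x y d i₀ j₀ e 1 = if i₀ = 0 ∧ j₀ = 0 ∧ p ∣ e then c else 0 := by
  have := h.detect_monomial hI hi₀ hj₀ e 0 0 0
  simpa [eq_comm] using this

theorem leftInvariant_monomial_eq_zero (h : PoincareTriple p s x y d)
    {Δ : R →ₐ[ℂ] R ⊗[ℂ] R} (hΔ : IsPoincareComul p x y d Δ) {I : R →ₗ[ℂ] ℂ} {c : ℂ}
    (hc : c ≠ 0)
    (hI : ∀ n m k : ℕ,
      I (x ^ n * y ^ m * d ^ k) = if n = p - 1 ∧ m = p - 1 ∧ p ∣ k then c else 0)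
    {J : R →ₗ[ℂ] ℂ}
    (hJ : ∀ a, TensorProduct.lid ℂ R (TensorProduct.map J LinearMap.id (Δ a)) = J a • 1)
    (n m : ℕ) {k : ℕ} (hk : ¬ p ∣ k) : J (x ^ n * y ^ m * d ^ k) = 0 := by
  have hp : 0 < p := Nat.pos_of_ne_zero h.ne_zero
  have h1 := congrArg (detect I p x y d 0 0 0) (hJ (x ^ n * y ^ m * d ^ k))
  rw [h.lid_map_comul_monomial hΔ, map_smul, h.detect_one hI hp hp] at h1
  simp only [map_sum, map_smul, h.detect_monomial hI hp hp, add_zero, hk, and_false, if_false,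
    smul_zero, Finset.sum_const_zero, dvd_zero, and_self, if_true] at h1
  exact (smul_eq_zero.mp h1.symm).resolve_right hc

theorem rightInvariant_coeff_mul_eq_zero (h : PoincareTriple p s x y d)
    {Δ : R →ₐ[ℂ] R ⊗[ℂ] R} (hΔ : IsPoincareComul p x y d Δ) {I : R →ₗ[ℂ] ℂ} {c : ℂ}
    (hc : c ≠ 0)
    (hI : ∀ n m k : ℕ,
      I (x ^ n * y ^ m * d ^ k) = if n = p - 1 ∧ m = p - 1 ∧ p ∣ k then c else 0)
    {J : R →ₗ[ℂ] ℂ}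
    (hJ : ∀ a, TensorProduct.rid ℂ R (TensorProduct.map LinearMap.id J (Δ a)) = J a • 1)
    {n m i j : ℕ} (k : ℕ) (hi : i ≤ n) (hj : j ≤ m) (hip : i < p) (hjp : j < p)
    (hij : ¬ (i = 0 ∧ j = 0)) :
    comulCoeff s n m i j * J (x ^ (n - i) * y ^ (m - j) * d ^ k) = 0 := by
  set l := n - i + (p - 1) * (m - j) + k with hl
  have hdvd : p ∣ l + (p - 1) * l := by
    refine ⟨l, ?_⟩
    obtain ⟨p', rfl⟩ := Nat.exists_eq_succ_of_ne_zero h.ne_zero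
    simp only [Nat.succ_eq_add_one, Nat.add_sub_cancel]
    ring
  have h1 := congrArg (detect I p x y d i j ((p - 1) * l)) (hJ (x ^ n * y ^ m * d ^ k))
  rw [h.rid_map_comul_monomial hΔ, map_smul, h.detect_one hI hip hjp,
    if_neg (fun hh => hij ⟨hh.1, hh.2.1⟩), smul_zero] at h1
  simp only [map_sum, map_smul, h.detect_monomial hI hip hjp] at h1
  rw [Finset.sum_eq_single_of_mem i (by simpa [Nat.lt_succ_iff] using hi),
    Finset.sum_eq_single_of_mem j (by simpa [Nat.lt_succ_iff] using hj), ← hl,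
    if_pos ⟨rfl, rfl, hdvd⟩] at h1
  · exact (smul_eq_zero.mp h1).resolve_right
      (mul_ne_zero (pow_ne_zero _ (inv_ne_zero h.param_ne_zero)) hc)
  · intro j' _ hj'
    simp [hj']
  · intro i' _ hi'
    simp [hi']

theorem invariant_eq_smul (h : PoincareTriple p s x y d)
    (hspan : Algebra.adjoin ℂ {x, y, d} = ⊤) {Δ : R →ₐ[ℂ] R ⊗[ℂ] R}
    (hΔ : IsPoincareComul p x y d Δ) {I : R →ₗ[ℂ] ℂ} {c : ℂ} (hc : c ≠ 0)
    (hI : ∀ n m k : ℕ,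
      I (x ^ n * y ^ m * d ^ k) = if n = p - 1 ∧ m = p - 1 ∧ p ∣ k then c else 0)
    {J : R →ₗ[ℂ] ℂ}
    (hJr : ∀ a, TensorProduct.rid ℂ R (TensorProduct.map LinearMap.id J (Δ a)) = J a • 1)
    (hJl : ∀ a, TensorProduct.lid ℂ R (TensorProduct.map J LinearMap.id (Δ a)) = J a • 1) :
    J = (J (x ^ (p - 1) * y ^ (p - 1)) / c) • I := by
  have hp : 0 < p := Nat.pos_of_ne_zero h.ne_zero
  refine h.linearMap_ext hspan fun n m k hn hm => ?_
  rw [LinearMap.smul_apply, hI, smul_eq_mul]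
  split_ifs with hcond
  · obtain ⟨rfl, rfl, hk⟩ := hcond
    rw [h.d_pow_of_dvd hk, mul_one, div_mul_cancel₀ _ hc]
  · rw [mul_zero]
    by_cases hk : p ∣ k
    · by_cases hn' : n = p - 1
      · have hm' : m + 1 < p := by
          have : m ≠ p - 1 := fun hm' => hcond ⟨hn', hm', hk⟩
          omega
        have h1 := h.rightInvariant_coeff_mul_eq_zero hΔ hc hI hJr (n := n) (m := m + 1)
          (i := 0) (j := 1) k (by omega) (by omega) (by omega) (by omega) (by simp)
        refine (mul_eq_zero.mp h1).resolve_left ?_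
        exact mul_ne_zero (mul_ne_zero (by simp)
          (gaussBinom_one_right_ne_zero h.prim (by omega) hm'))
          (pow_ne_zero _ (inv_ne_zero h.param_ne_zero))
      · have h1 := h.rightInvariant_coeff_mul_eq_zero hΔ hc hI hJr (n := n + 1) (m := m)
          (i := 1) (j := 0) k (by omega) (by omega) (by omega) (by omega) (by simp)
        refine (mul_eq_zero.mp h1).resolve_left ?_
        exact mul_ne_zero (mul_ne_zero
          (gaussBinom_one_right_ne_zero h.prim.inv (by omega) (by omega)) (by simp))
          (pow_ne_zero _ (inv_ne_zero h.param_ne_zero))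
    · exact h.leftInvariant_monomial_eq_zero hΔ hc hI hJl n m hk

end PoincareTriple

theorem isPrimitiveRoot_q_sq {p : ℕ} (hp : Odd p) : IsPrimitiveRoot (q p ^ 2) p :=
  (Complex.isPrimitiveRoot_exp p hp.pos.ne').pow_of_coprime 2
    (Nat.coprime_two_left.mpr hp)

theorem poincareTriple_A {p : ℕ} (hp : Odd p) :
    PoincareTriple p (q p ^ 2) (ηp p) (ηm p) (dl p) where
  ne_zero := hp.pos.ne'
  prim := isPrimitiveRoot_q_sq hp
  y_mul_x := by simpa [ηp, ηm] using RingQuot.mkAlgHom_rel ℂ (ERel.commEta (p := p))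
  x_mul_d := by simpa [ηp, dl] using RingQuot.mkAlgHom_rel ℂ (ERel.commEpD (p := p))
  y_mul_d := by simpa [ηm, dl] using RingQuot.mkAlgHom_rel ℂ (ERel.commEmD (p := p))
  d_pow := by simpa [dl] using RingQuot.mkAlgHom_rel ℂ (ERel.deltaPow (p := p))
  x_pow := by simpa [ηp] using RingQuot.mkAlgHom_rel ℂ (ERel.epPow (p := p))
  y_pow := by simpa [ηm] using RingQuot.mkAlgHom_rel ℂ (ERel.emPow (p := p))

theorem adjoin_generators_A (p : ℕ) :
    Algebra.adjoin ℂ {ηp p, ηm p, dl p} = (⊤ : Subalgebra ℂ (A p)) := by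
  rw [← (AlgHom.range_eq_top _).mpr (RingQuot.mkAlgHom_surjective ℂ (ERel p)),
    ← Algebra.map_top, ← FreeAlgebra.adjoin_range_ι, AlgHom.map_adjoin, ← Set.range_comp]
  congr 1
  ext a
  simp only [Set.mem_insert_iff, Set.mem_singleton_iff, Set.mem_range, Function.comp_apply]
  constructor
  · rintro (rfl | rfl | rfl)
    exacts [⟨.ep, rfl⟩, ⟨.em, rfl⟩, ⟨.d, rfl⟩]
  · rintro ⟨_ | _ | _, rfl⟩
    exacts [.inl rfl, .inr (.inl rfl), .inr (.inr rfl)]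

/-- The linear functional `I` with `I(η₊^{p-1}η₋^{p-1}) = q⁻¹` and `I = 0` on all other
basis monomials is the unique (up to scalar) two-sided invariant integral on `E(1,1|p)`. -/
theorem statement3 (p : ℕ) (hp : Odd p) (hp3 : 3 ≤ p)
    (Δ : A p →ₐ[ℂ] (A p ⊗[ℂ] A p))
    (hΔ₁ : Δ (ηp p) = ηp p ⊗ₜ[ℂ] 1 + dl p ⊗ₜ[ℂ] ηp p)
    (hΔ₂ : Δ (ηm p) = ηm p ⊗ₜ[ℂ] 1 + (dl p ^ (p - 1)) ⊗ₜ[ℂ] ηm p)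
    (hΔ₃ : Δ (dl p) = dl p ⊗ₜ[ℂ] dl p)
    (I : A p →ₗ[ℂ] ℂ)
    (hI : ∀ n m k : ℕ, n < p → m < p → k < p →
      I (ηp p ^ n * ηm p ^ m * dl p ^ k) =
        if n = p - 1 ∧ m = p - 1 ∧ k = 0 then (q p)⁻¹ else 0) :
    -- right invariance: (id ⊗ I)(Δ a) = I(a)·1
    (∀ a : A p,
      (TensorProduct.rid ℂ (A p)) ((TensorProduct.map LinearMap.id I) (Δ a)) = I a • 1) ∧
    -- left invariance: (I ⊗ id)(Δ a) = I(a)·1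
    (∀ a : A p,
      (TensorProduct.lid ℂ (A p)) ((TensorProduct.map I LinearMap.id) (Δ a)) = I a • 1) ∧
    -- uniqueness up to a complex scalar
    (∀ J : A p →ₗ[ℂ] ℂ,
      (∀ a : A p,
        (TensorProduct.rid ℂ (A p)) ((TensorProduct.map LinearMap.id J) (Δ a)) = J a • 1) →
      (∀ a : A p,
        (TensorProduct.lid ℂ (A p)) ((TensorProduct.map J LinearMap.id) (Δ a)) = J a • 1) →
      ∃ c : ℂ, J = c • I) := by
  have h := poincareTriple_A hp
  have hspan := adjoin_generators_A p
  have hΔ : IsPoincareComul p (ηp p) (ηm p) (dl p) Δ := ⟨hΔ₁, hΔ₂, hΔ₃⟩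
  have hI' := h.integral_monomial hI
  have hc : (q p)⁻¹ ≠ 0 := inv_ne_zero (Complex.exp_ne_zero _)
  exact ⟨h.integral_right_invariant hspan hΔ hI', h.integral_left_invariant hspan hΔ hI',
    fun J hJr hJl => ⟨_, h.invariant_eq_smul hspan hΔ hc hI' hJr hJl⟩⟩
end
end

section
/- For every a ∈ A, every compactly supported smooth function f ∈ C_c^∞(ℝ², ℂ), and every z ∈ ℝ²: ∫_{ℝ²} (id_A ⊗ I)(G_{a,f}(z,w)) dw = I(a)·(∫_{ℝ²} f)·1_A, and for every w ∈ ℝ²: ∫_{ℝ²} (I ⊗ id_A)(G_{a,f}(z,w)) dz = I(a)·(∫_{ℝ²} f)·1_A. In other words, the linear functional I_E(a⊗f) := I(a)·∫_{ℝ²} f is a two-sided invariant integral on the quantum Poincaré group E_q(1,1) at roots of unity, whose coproduct on A⊗C_c^∞(ℝ²) is given by (z,w) ↦ G_{a,f}(z,w). -/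
open scoped TensorProduct

noncomputable section

/-- `B₊ = (−1)^{(p+1)/2} Σ_{n=1}^{p−1} (q^{n²}/([p−n]![n]!)) η₊^{p−n} δ^n ⊗ η₊^n`. -/
def Bplus (p : ℕ) : A p ⊗[ℂ] A p :=
  (-1 : ℂ) ^ ((p + 1) / 2) •
    ∑ n ∈ Finset.Icc 1 (p - 1),
      (q p ^ (n ^ 2) / (qfact p (p - n) * qfact p n)) •
        ((ηp p ^ (p - n) * dl p ^ n) ⊗ₜ[ℂ] ηp p ^ n)

/-- `B₋ = (−1)^{(p+1)/2} Σ_{n=1}^{p−1} (q^{−n²}/([p−n]![n]!)) η₋^{p−n} δ^{−n} ⊗ η₋^n`,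
where `δ^{−1} = δ^{p−1}`. -/
def Bminus (p : ℕ) : A p ⊗[ℂ] A p :=
  (-1 : ℂ) ^ ((p + 1) / 2) •
    ∑ n ∈ Finset.Icc 1 (p - 1),
      ((q p)⁻¹ ^ (n ^ 2) / (qfact p (p - n) * qfact p n)) •
        ((ηm p ^ (p - n) * (dl p ^ (p - 1)) ^ n) ⊗ₜ[ℂ] ηm p ^ n)

theorem q_ne_zero (p : ℕ) : q p ≠ 0 := Complex.exp_ne_zero _

/-- `q`-commuting elements satisfy a binomial formula whose two extreme coefficients are `1`. -/
theorem exists_add_pow_eq_sum {R : Type*} [Semiring R] [Algebra ℂ R] {x y : R} {r : ℂ}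
    (h : x * y = r • (y * x)) (n : ℕ) :
    ∃ c : ℕ → ℂ, c 0 = 1 ∧ c n = 1 ∧ (∀ i, n < i → c i = 0) ∧
      (x + y) ^ n = ∑ i ∈ Finset.range (n + 1), c i • (y ^ i * x ^ (n - i)) := by
  have hx : ∀ i, x * y ^ i = r ^ i • (y ^ i * x) := by
    intro i
    induction i with
    | zero => simp
    | succ i ih =>
      rw [pow_succ, ← mul_assoc, ih, smul_mul_assoc, mul_assoc, h, mul_smul_comm, smul_smul,
        mul_assoc, pow_succ]
  induction n with
  | zero => exact ⟨fun i => if i = 0 then 1 else 0, by simp, by simp,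
      fun i hi => by simp [hi.ne'], by simp⟩
  | succ n ih =>
    obtain ⟨c, hc0, hcn, hc, hsum⟩ := ih
    refine ⟨fun i => r ^ i * c i + if i = 0 then 0 else c (i - 1), by simp [hc0],
      by simp [hcn, hc (n + 1) (by omega)], fun i hi => ?_, ?_⟩
    · simp [hc i (by omega), hc (i - 1) (by omega)]
    · have hX : x * ∑ i ∈ Finset.range (n + 1), c i • (y ^ i * x ^ (n - i)) =
          ∑ i ∈ Finset.range (n + 1 + 1), (r ^ i * c i) • (y ^ i * x ^ (n + 1 - i)) := by
        rw [Finset.sum_range_succ _ (n + 1), hc (n + 1) (by omega), mul_zero, zero_smul, add_zero,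
          Finset.mul_sum]
        refine Finset.sum_congr rfl fun i hi => ?_
        have hi : n + 1 - i = n - i + 1 := by have := Finset.mem_range.1 hi; omega
        rw [mul_smul_comm, ← mul_assoc, hx, smul_mul_assoc, smul_smul, mul_assoc, hi,
          pow_succ' x, mul_comm (c i)]
      have hY : y * ∑ i ∈ Finset.range (n + 1), c i • (y ^ i * x ^ (n - i)) =
          ∑ i ∈ Finset.range (n + 1 + 1),
            (if i = 0 then 0 else c (i - 1)) • (y ^ i * x ^ (n + 1 - i)) := by
        rw [Finset.sum_range_succ' _ (n + 1), Finset.mul_sum]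
        simp [pow_succ', mul_assoc]
      rw [pow_succ', hsum, add_mul, hX, hY, ← Finset.sum_add_distrib]
      simp only [add_smul]

theorem exists_pow_mul_pow_eq_smul {R : Type*} [Semiring R] [Algebra ℂ R] {x y : R} {r : ℂ}
    (h : x * y = r • (y * x)) (m n : ℕ) :
    ∃ s : ℂ, x ^ m * y ^ n = s • (y ^ n * x ^ m) := by
  have hx : ∃ s : ℂ, x ^ m * y = s • (y * x ^ m) := by
    induction m with
    | zero => exact ⟨1, by simp⟩
    | succ m ih =>
      obtain ⟨s, hs⟩ := ih
      refine ⟨r * s, ?_⟩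
      rw [pow_succ, mul_assoc, h, mul_smul_comm, ← mul_assoc, hs, smul_mul_assoc, smul_smul,
        mul_assoc]
  obtain ⟨s, hs⟩ := hx
  induction n with
  | zero => exact ⟨1, by simp⟩
  | succ n ih =>
    obtain ⟨t, ht⟩ := ih
    refine ⟨t * s, ?_⟩
    rw [pow_succ, ← mul_assoc, ht, smul_mul_assoc, mul_assoc, hs, mul_smul_comm, smul_smul,
      ← mul_assoc]

theorem ηm_mul_ηp (p : ℕ) : ηm p * ηp p = (q p ^ 2) • (ηp p * ηm p) := by
  simpa [ηm, ηp] using RingQuot.mkAlgHom_rel ℂ (ERel.commEta (p := p))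

theorem ηp_mul_dl (p : ℕ) : ηp p * dl p = (q p ^ 2) • (dl p * ηp p) := by
  simpa [dl, ηp] using RingQuot.mkAlgHom_rel ℂ (ERel.commEpD (p := p))

theorem ηm_mul_dl (p : ℕ) : ηm p * dl p = (q p ^ 2) • (dl p * ηm p) := by
  simpa [dl, ηm] using RingQuot.mkAlgHom_rel ℂ (ERel.commEmD (p := p))

theorem dl_pow (p : ℕ) : dl p ^ p = 1 := by
  simpa [dl] using RingQuot.mkAlgHom_rel ℂ (ERel.deltaPow (p := p))

theorem ηp_pow (p : ℕ) : ηp p ^ p = 0 := by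
  simpa [ηp] using RingQuot.mkAlgHom_rel ℂ (ERel.epPow (p := p))

theorem ηm_pow (p : ℕ) : ηm p ^ p = 0 := by
  simpa [ηm] using RingQuot.mkAlgHom_rel ℂ (ERel.emPow (p := p))

theorem dl_mul_ηp (p : ℕ) : dl p * ηp p = (q p ^ 2)⁻¹ • (ηp p * dl p) := by
  rw [ηp_mul_dl, inv_smul_smul₀ (pow_ne_zero 2 (q_ne_zero p))]

theorem dl_mul_ηm (p : ℕ) : dl p * ηm p = (q p ^ 2)⁻¹ • (ηm p * dl p) := by
  rw [ηm_mul_dl, inv_smul_smul₀ (pow_ne_zero 2 (q_ne_zero p))]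

/-- The monomial `η₊^n η₋^m δ^k`. -/
def monom (p n m k : ℕ) : A p := ηp p ^ n * ηm p ^ m * dl p ^ k

theorem span_monom (p : ℕ) :
    Submodule.span ℂ (Set.range fun t : ℕ × ℕ × ℕ => monom p t.1 t.2.1 t.2.2) = ⊤ := by
  set S := Submodule.span ℂ (Set.range fun t : ℕ × ℕ × ℕ => monom p t.1 t.2.1 t.2.2) with hS
  have mem : ∀ n m k, monom p n m k ∈ S := fun n m k => Submodule.subset_span ⟨(n, m, k), rfl⟩
  have lift : ∀ g : A p, (∀ n m k, g * monom p n m k ∈ S) → ∀ s ∈ S, g * s ∈ S := by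
    intro g hg s hs
    induction hs using Submodule.span_induction with
    | mem x hx => obtain ⟨t, rfl⟩ := hx; exact hg _ _ _
    | zero => simp
    | add x y _ _ hx hy => rw [mul_add]; exact S.add_mem hx hy
    | smul c x _ hx => rw [mul_smul_comm]; exact S.smul_mem c hx
  have key : ∀ x : FreeAlgebra ℂ Gen, ∀ s ∈ S, RingQuot.mkAlgHom ℂ (ERel p) x * s ∈ S := by
    intro x
    induction x using FreeAlgebra.induction with
    | grade0 r =>
      intro s hs
      rw [AlgHom.commutes, ← Algebra.smul_def]
      exact S.smul_mem r hs
    | grade1 g =>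
      cases g with
      | ep =>
        refine lift (ηp p) fun n m k => ?_
        have : ηp p * monom p n m k = monom p (n + 1) m k := by
          simp only [monom, pow_succ', mul_assoc]
        exact this ▸ mem _ _ _
      | em =>
        refine lift (ηm p) fun n m k => ?_
        obtain ⟨s, hs⟩ := exists_pow_mul_pow_eq_smul (ηm_mul_ηp p) 1 n
        rw [pow_one] at hs
        have : ηm p * monom p n m k = s • monom p n (m + 1) k := by
          simp only [monom]
          rw [← mul_assoc, ← mul_assoc, hs, smul_mul_assoc, smul_mul_assoc, pow_succ' (ηm p)]
          simp only [mul_assoc]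
        exact this ▸ S.smul_mem _ (mem _ _ _)
      | d =>
        refine lift (dl p) fun n m k => ?_
        obtain ⟨s, hs⟩ := exists_pow_mul_pow_eq_smul (dl_mul_ηp p) 1 n
        obtain ⟨t, ht⟩ := exists_pow_mul_pow_eq_smul (dl_mul_ηm p) 1 m
        rw [pow_one] at hs ht
        have : dl p * monom p n m k = (s * t) • monom p n m (k + 1) := by
          simp only [monom]
          rw [← mul_assoc, ← mul_assoc, hs, smul_mul_assoc, smul_mul_assoc, mul_assoc (ηp p ^ n),
            ht, mul_smul_comm, smul_mul_assoc, smul_smul, pow_succ' (dl p)]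
          simp only [mul_assoc]
        exact this ▸ S.smul_mem _ (mem _ _ _)
    | mul x y hx hy =>
      intro s hs
      rw [map_mul, mul_assoc]
      exact hx _ (hy _ hs)
    | add x y hx hy =>
      intro s hs
      rw [map_add, add_mul]
      exact S.add_mem (hx _ hs) (hy _ hs)
  refine Submodule.eq_top_iff'.2 fun a => ?_
  obtain ⟨x, rfl⟩ := RingQuot.mkAlgHom_surjective ℂ (ERel p) a
  simpa using key x 1 (by simpa [monom] using mem 0 0 0)

theorem dl_pow_mod (p k : ℕ) : dl p ^ (k % p) = dl p ^ k :=
  (pow_eq_pow_mod k (dl_pow p)).symm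

/-- Two linear maps on `A` agree once they agree on the reduced monomials. -/
theorem linearMap_ext_monom {p : ℕ} (hp : 0 < p) {M : Type*} [AddCommMonoid M] [Module ℂ M]
    {F G : A p →ₗ[ℂ] M}
    (h : ∀ n m k, n < p → m < p → k < p → F (monom p n m k) = G (monom p n m k)) : F = G := by
  refine LinearMap.ext_on_range (span_monom p) fun t => ?_
  obtain ⟨n, m, k⟩ := t
  rcases le_or_gt p n with hn | hn
  · simp [monom, pow_eq_zero_of_le hn (ηp_pow p)]
  rcases le_or_gt p m with hm | hm
  · simp [monom, pow_eq_zero_of_le hm (ηm_pow p)]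
  have := h n m (k % p) hn hm (Nat.mod_lt _ hp)
  simpa only [monom, dl_pow_mod] using this

section Invariance

variable {p : ℕ} {Δ : A p →ₐ[ℂ] (A p ⊗[ℂ] A p)} {I : A p →ₗ[ℂ] ℂ}

/-- The coproduct of a monomial, up to the values of the non-extreme coefficients. -/
theorem exists_coproduct_monom
    (hΔ₁ : Δ (ηp p) = ηp p ⊗ₜ[ℂ] 1 + dl p ⊗ₜ[ℂ] ηp p)
    (hΔ₂ : Δ (ηm p) = ηm p ⊗ₜ[ℂ] 1 + (dl p ^ (p - 1)) ⊗ₜ[ℂ] ηm p)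
    (hΔ₃ : Δ (dl p) = dl p ⊗ₜ[ℂ] dl p) (n m k : ℕ) :
    ∃ c d : ℕ → ℂ, c 0 = 1 ∧ c n = 1 ∧ d 0 = 1 ∧ d m = 1 ∧
      Δ (monom p n m k) = ∑ i ∈ Finset.range (n + 1), ∑ j ∈ Finset.range (m + 1),
        (c i * d j) • ((dl p ^ i * ηp p ^ (n - i) * ((dl p ^ (p - 1)) ^ j * ηm p ^ (m - j)) *
          dl p ^ k) ⊗ₜ[ℂ] monom p i j k) := by
  have h₁ : (ηp p ⊗ₜ[ℂ] (1 : A p)) * (dl p ⊗ₜ[ℂ] ηp p) =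
      (q p ^ 2) • ((dl p ⊗ₜ[ℂ] ηp p) * (ηp p ⊗ₜ[ℂ] (1 : A p))) := by
    simp [ηp_mul_dl, TensorProduct.smul_tmul']
  obtain ⟨r, hr⟩ := exists_pow_mul_pow_eq_smul (ηm_mul_dl p) 1 (p - 1)
  rw [pow_one] at hr
  have h₂ : (ηm p ⊗ₜ[ℂ] (1 : A p)) * ((dl p ^ (p - 1)) ⊗ₜ[ℂ] ηm p) =
      r • (((dl p ^ (p - 1)) ⊗ₜ[ℂ] ηm p) * (ηm p ⊗ₜ[ℂ] (1 : A p))) := by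
    simp [hr, TensorProduct.smul_tmul']
  obtain ⟨c, hc0, hcn, -, hc⟩ := exists_add_pow_eq_sum h₁ n
  obtain ⟨d, hd0, hdm, -, hd⟩ := exists_add_pow_eq_sum h₂ m
  refine ⟨c, d, hc0, hcn, hd0, hdm, ?_⟩
  rw [monom, map_mul, map_mul, map_pow, map_pow, map_pow, hΔ₁, hΔ₂, hΔ₃, hc, hd,
    Finset.sum_mul_sum, Finset.sum_mul]
  refine Finset.sum_congr rfl fun i _ => ?_
  rw [Finset.sum_mul]
  refine Finset.sum_congr rfl fun j _ => ?_
  simp only [smul_mul_assoc, mul_smul_comm, smul_smul, Algebra.TensorProduct.tmul_pow,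
    Algebra.TensorProduct.tmul_mul_tmul, one_pow, mul_one, monom, mul_comm (d j)]

theorem right_invariance (hp : 0 < p)
    (hΔ₁ : Δ (ηp p) = ηp p ⊗ₜ[ℂ] 1 + dl p ⊗ₜ[ℂ] ηp p)
    (hΔ₂ : Δ (ηm p) = ηm p ⊗ₜ[ℂ] 1 + (dl p ^ (p - 1)) ⊗ₜ[ℂ] ηm p)
    (hΔ₃ : Δ (dl p) = dl p ⊗ₜ[ℂ] dl p)
    (hI : ∀ n m k : ℕ, n < p → m < p → k < p →
      I (ηp p ^ n * ηm p ^ m * dl p ^ k) =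
        if n = p - 1 ∧ m = p - 1 ∧ k = 0 then (q p)⁻¹ else 0) (a : A p) :
    TensorProduct.rid ℂ (A p) (TensorProduct.map LinearMap.id I (Δ a)) = I a • 1 := by
  have hext : (TensorProduct.rid ℂ (A p)).toLinearMap ∘ₗ
      TensorProduct.map LinearMap.id I ∘ₗ Δ.toLinearMap = I.smulRight 1 := by
    refine linearMap_ext_monom hp fun n m k hn hm hk => ?_
    obtain ⟨c, d, -, hcn, -, hdm, hΔ⟩ := exists_coproduct_monom hΔ₁ hΔ₂ hΔ₃ n m k
    have hI' : ∀ i < p, ∀ j < p, I (monom p i j k) =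
        if i = p - 1 ∧ j = p - 1 ∧ k = 0 then (q p)⁻¹ else 0 := fun i hi j hj => hI i j k hi hj hk
    simp only [LinearMap.comp_apply, AlgHom.toLinearMap_apply, hΔ, map_sum, map_smul,
      TensorProduct.map_tmul, LinearMap.id_apply, LinearEquiv.coe_coe, TensorProduct.rid_tmul,
      LinearMap.smulRight_apply]
    rw [Finset.sum_eq_single n, Finset.sum_eq_single m]
    · rw [hI' n hn m hm]
      split_ifs with h
      · obtain ⟨rfl, rfl, rfl⟩ := h
        rw [hcn, hdm, Nat.sub_self, ← pow_mul, pow_zero, pow_zero, pow_zero, mul_one, mul_one,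
          mul_one, mul_one, ← pow_add, one_smul,
          show p - 1 + (p - 1) * (p - 1) = p * (p - 1) by
            obtain ⟨r, rfl⟩ : ∃ r, p = r + 1 := ⟨p - 1, by omega⟩
            simp; ring,
          pow_mul, dl_pow, one_pow]
      · simp
    · intro j hj hjm
      have := Finset.mem_range.1 hj
      rw [hI' n hn j (by omega), if_neg (by omega), zero_smul, smul_zero]
    · simp
    · intro i hi hin
      have := Finset.mem_range.1 hi
      refine Finset.sum_eq_zero fun j hj => ?_
      have := Finset.mem_range.1 hj
      rw [hI' i (by omega) j (by omega), if_neg (by omega), zero_smul, smul_zero]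
    · simp
  exact LinearMap.congr_fun hext a

theorem left_invariance (hp : 0 < p)
    (hΔ₁ : Δ (ηp p) = ηp p ⊗ₜ[ℂ] 1 + dl p ⊗ₜ[ℂ] ηp p)
    (hΔ₂ : Δ (ηm p) = ηm p ⊗ₜ[ℂ] 1 + (dl p ^ (p - 1)) ⊗ₜ[ℂ] ηm p)
    (hΔ₃ : Δ (dl p) = dl p ⊗ₜ[ℂ] dl p)
    (hI : ∀ n m k : ℕ, n < p → m < p → k < p →
      I (ηp p ^ n * ηm p ^ m * dl p ^ k) =
        if n = p - 1 ∧ m = p - 1 ∧ k = 0 then (q p)⁻¹ else 0) (a : A p) :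
    TensorProduct.lid ℂ (A p) (TensorProduct.map I LinearMap.id (Δ a)) = I a • 1 := by
  have hext : (TensorProduct.lid ℂ (A p)).toLinearMap ∘ₗ
      TensorProduct.map I LinearMap.id ∘ₗ Δ.toLinearMap = I.smulRight 1 := by
    refine linearMap_ext_monom hp fun n m k hn hm hk => ?_
    obtain ⟨c, d, hc0, -, hd0, -, hΔ⟩ := exists_coproduct_monom hΔ₁ hΔ₂ hΔ₃ n m k
    have hI' : ∀ i j n' m', n' < p → m' < p → ¬(n' = p - 1 ∧ m' = p - 1) →
        I (dl p ^ i * ηp p ^ n' * ((dl p ^ (p - 1)) ^ j * ηm p ^ m') * dl p ^ k) = 0 := by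
      intro i j n' m' hn' hm' hne
      obtain ⟨s, hs⟩ := exists_pow_mul_pow_eq_smul (dl_mul_ηp p) i n'
      obtain ⟨t, ht⟩ := exists_pow_mul_pow_eq_smul (dl_mul_ηm p) (i + (p - 1) * j) m'
      have hmono : dl p ^ i * ηp p ^ n' * ((dl p ^ (p - 1)) ^ j * ηm p ^ m') * dl p ^ k =
          (s * t) • (ηp p ^ n' * ηm p ^ m' * dl p ^ ((i + (p - 1) * j + k) % p)) := by
        rw [hs, ← pow_mul, smul_mul_assoc, smul_mul_assoc, ← mul_assoc (_ * _),
          mul_assoc (ηp p ^ n'), ← pow_add, mul_assoc (ηp p ^ n'), ht, mul_smul_comm,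
          smul_mul_assoc, smul_smul, dl_pow_mod, pow_add _ _ k]
        simp only [mul_assoc]
      rw [hmono, map_smul, hI _ _ _ hn' hm' (Nat.mod_lt _ hp), if_neg (by tauto), smul_zero]
    simp only [LinearMap.comp_apply, AlgHom.toLinearMap_apply, hΔ, map_sum, map_smul,
      TensorProduct.map_tmul, LinearMap.id_apply, LinearEquiv.coe_coe, TensorProduct.lid_tmul,
      LinearMap.smulRight_apply]
    rw [Finset.sum_eq_single 0, Finset.sum_eq_single 0]
    · rw [hc0, hd0, Nat.sub_zero, Nat.sub_zero, pow_zero, pow_zero, one_mul, one_mul, one_mul,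
        one_smul, monom, monom, hI n m k hn hm hk]
      split_ifs with h
      · obtain ⟨-, -, rfl⟩ := h
        simp
      · simp
    · intro j hj hj0
      have := Finset.mem_range.1 hj
      rw [hI' _ _ _ _ (by omega) (by omega) (by omega), zero_smul, smul_zero]
    · simp
    · intro i hi hi0
      have := Finset.mem_range.1 hi
      refine Finset.sum_eq_zero fun j hj => ?_
      have := Finset.mem_range.1 hj
      rw [hI' _ _ _ _ (by omega) (by omega) (by omega), zero_smul, smul_zero]
    · simp
  exact LinearMap.congr_fun hext a

end Invariance

open MeasureTheory

theorem integral_fderiv_apply_eq_zero {g : ℝ × ℝ → ℂ} (hg : ContDiff ℝ 1 g)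
    (hsupp : HasCompactSupport g) (v : ℝ × ℝ) : ∫ u, fderiv ℝ g u v = 0 := by
  have hint : Integrable fun u => fderiv ℝ g u v :=
    ((hg.continuous_fderiv one_ne_zero).clm_apply continuous_const).integrable_of_hasCompactSupport
      (hsupp.fderiv_apply ℝ v)
  have := integral_smul_fderiv_eq_neg_fderiv_smul_of_integrable (𝕜 := ℝ) (μ := volume)
    (f := fun _ : ℝ × ℝ => (1 : ℝ)) (g := g) (v := v) (by simp) (by simpa using hint)
    (by simpa using hg.continuous.integrable_of_hasCompactSupport hsupp)
    (fun _ _ => differentiableAt_const _) fun _ _ => hg.differentiable one_ne_zero _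
  simpa using this

/-- Only the term without derivatives contributes to the integral of a linear image of `G`. -/
theorem integral_linear_expansion {V : Type*} [Semiring V] [Algebra ℂ V] (L : V →ₗ[ℂ] ℂ)
    {f : ℝ × ℝ → ℂ} (hf : ContDiff ℝ (⊤ : ℕ∞) f) (hsupp : HasCompactSupport f) (D b₁ b₂ b₃ : V) :
    ∫ u : ℝ × ℝ, L (D * (f u • 1 + fderiv ℝ f u (1, 0) • b₁ + fderiv ℝ f u (0, 1) • b₂ +
      fderiv ℝ (fun u => fderiv ℝ f u (0, 1)) u (1, 0) • b₃)) = (∫ u, f u) * L D := by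
  have hint : ∀ {g : ℝ × ℝ → ℂ}, ContDiff ℝ 1 g → HasCompactSupport g → ∀ v,
      Integrable fun u => fderiv ℝ g u v := fun hg hs v =>
    ((hg.continuous_fderiv one_ne_zero).clm_apply continuous_const).integrable_of_hasCompactSupport
      (hs.fderiv_apply ℝ v)
  have hf1 : ContDiff ℝ 1 f := hf.of_le (by exact_mod_cast le_top)
  have hf2 : ContDiff ℝ 1 fun u => fderiv ℝ f u (0, 1) :=
    (hf.fderiv_right (m := 1) (by norm_cast)).clm_apply contDiff_const
  have hs2 : HasCompactSupport fun u => fderiv ℝ f u (0, 1) := hsupp.fderiv_apply ℝ _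
  have h0 : Integrable f := hf.continuous.integrable_of_hasCompactSupport hsupp
  simp only [mul_add, mul_smul_comm, mul_one, map_add, map_smul, smul_eq_mul]
  rw [integral_add, integral_add, integral_add, integral_mul_const, integral_mul_const,
    integral_mul_const, integral_mul_const, integral_fderiv_apply_eq_zero hf1 hsupp,
    integral_fderiv_apply_eq_zero hf1 hsupp, integral_fderiv_apply_eq_zero hf2 hs2]
  · simp
  · exact h0.mul_const _
  · exact (hint hf1 hsupp _).mul_const _
  · exact (h0.mul_const _).add ((hint hf1 hsupp _).mul_const _)
  · exact (hint hf1 hsupp _).mul_const _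
  · exact ((h0.mul_const _).add ((hint hf1 hsupp _).mul_const _)).add
      ((hint hf1 hsupp _).mul_const _)
  · exact (hint hf2 hs2 _).mul_const _

/-- `I_E(a⊗f) = I(a)·∫f` is a two-sided invariant integral on the quantum Poincaré group
`E_q(1,1) = E(1,1|p) ⋉ ℝ²` at roots of unity: integrating over the second (resp. first)
leg of the coproduct `G_{a,f}` of `a⊗f` yields `I(a)·(∫f)·1_A`.  (The `A`-valued identity
is expressed weakly, tested against an arbitrary linear functional `φ` on `A`.) -/
theorem statement8 (p : ℕ) (hp : Odd p) (hp3 : 3 ≤ p)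
    (Δ : A p →ₐ[ℂ] (A p ⊗[ℂ] A p))
    (hΔ₁ : Δ (ηp p) = ηp p ⊗ₜ[ℂ] 1 + dl p ⊗ₜ[ℂ] ηp p)
    (hΔ₂ : Δ (ηm p) = ηm p ⊗ₜ[ℂ] 1 + (dl p ^ (p - 1)) ⊗ₜ[ℂ] ηm p)
    (hΔ₃ : Δ (dl p) = dl p ⊗ₜ[ℂ] dl p)
    (I : A p →ₗ[ℂ] ℂ)
    (hI : ∀ n m k : ℕ, n < p → m < p → k < p →
      I (ηp p ^ n * ηm p ^ m * dl p ^ k) =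
        if n = p - 1 ∧ m = p - 1 ∧ k = 0 then (q p)⁻¹ else 0)
    (a : A p) (f : ℝ × ℝ → ℂ)
    (hf : ContDiff ℝ (⊤ : ℕ∞) f) (hsupp : HasCompactSupport f) :
    -- right invariance: ∫ (id ⊗ I)(G_{a,f}(z,·)) = I(a)·(∫f)·1_A for every z
    (∀ z : ℝ × ℝ, ∀ φ : A p →ₗ[ℂ] ℂ,
      (∫ w : ℝ × ℝ,
        φ ((TensorProduct.rid ℂ (A p))
          ((TensorProduct.map LinearMap.id I)
            (Δ a *
              (f (z + w) • 1 +
               (fderiv ℝ f (z + w) (1, 0)) • Bplus p +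
               (fderiv ℝ f (z + w) (0, 1)) • Bminus p +
               (fderiv ℝ (fun u => fderiv ℝ f u (0, 1)) (z + w) (1, 0)) •
                 (Bplus p * Bminus p)))))) =
        I a * (∫ u : ℝ × ℝ, f u) * φ 1) ∧
    -- left invariance: ∫ (I ⊗ id)(G_{a,f}(·,w)) = I(a)·(∫f)·1_A for every w
    (∀ w : ℝ × ℝ, ∀ φ : A p →ₗ[ℂ] ℂ,
      (∫ z : ℝ × ℝ,
        φ ((TensorProduct.lid ℂ (A p))
          ((TensorProduct.map I LinearMap.id)
            (Δ a *
              (f (z + w) • 1 +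
               (fderiv ℝ f (z + w) (1, 0)) • Bplus p +
               (fderiv ℝ f (z + w) (0, 1)) • Bminus p +
               (fderiv ℝ (fun u => fderiv ℝ f u (0, 1)) (z + w) (1, 0)) •
                 (Bplus p * Bminus p)))))) =
        I a * (∫ u : ℝ × ℝ, f u) * φ 1) := by
  have hp0 : 0 < p := by omega
  refine ⟨fun z φ => ?_, fun w φ => ?_⟩
  · have h := integral_linear_expansion
      (φ ∘ₗ (TensorProduct.rid ℂ (A p)).toLinearMap ∘ₗ TensorProduct.map LinearMap.id I)
      hf hsupp (Δ a) (Bplus p) (Bminus p) (Bplus p * Bminus p)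
    rw [← integral_add_left_eq_self _ z] at h
    simp only [LinearMap.comp_apply, LinearEquiv.coe_coe] at h
    rw [h, right_invariance hp0 hΔ₁ hΔ₂ hΔ₃ hI, map_smul, smul_eq_mul]
    ring
  · have h := integral_linear_expansion
      (φ ∘ₗ (TensorProduct.lid ℂ (A p)).toLinearMap ∘ₗ TensorProduct.map I LinearMap.id)
      hf hsupp (Δ a) (Bplus p) (Bminus p) (Bplus p * Bminus p)
    rw [← integral_add_right_eq_self _ w] at h
    simp only [LinearMap.comp_apply, LinearEquiv.coe_coe] at h
    rw [h, left_invariance hp0 hΔ₁ hΔ₂ hΔ₃ hI, map_smul, smul_eq_mul]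
    ring
end
end
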